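/- arXiv:2108.00088 — 2 statements merged into one kernel-verified Lean document; each statement's English description precedes it below -/
import Mathlib

section
/- Let x ∈ 𝕊², let p ∈ ℝ³ satisfy ⟨p, x⟩ = 0, and set y = T(x,p). Then the function f(z) = −2 log‖z − y‖ is differentiable at z = x with (Euclidean) gradient ∇f(x) = −(x + p); in particular, for every tangent vector v ∈ ℝ³ with ⟨v, x⟩ = 0, the directional derivative of f at x in direction v equals −⟨p, v⟩. That is, the tangential gradient of the cost c(·, T(x,p)) at x equals −p, which is the optimality condition ∇ₓc(x, T(x,p)) = −p characterizing T as the optimal transport map for the cost c. -/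
/-!
The gradient of `z ↦ -2 log ‖z - y‖` at `x` is `-(2 / ‖x - y‖ ^ 2) • (x - y)`. For `y = T(x, p)`
the vector `x - y` is the multiple `2 / (‖p‖ ^ 2 + 1)` of `x + p`, and `‖x + p‖ ^ 2 = ‖p‖ ^ 2 + 1`
by Pythagoras, so the gradient is `-(x + p)`. Its normal part `-x` is orthogonal to every tangent
vector.
-/

open scoped RealInnerProductSpace

section NormedSpace

variable {E : Type*} [NormedAddCommGroup E] [NormedSpace ℝ E]

/-- The optical map `T(x, p)`, the target of the ray attached to the point `x` of the unit sphere
and the tangent vector `p`; it is defined here for all vectors `x` and `p`. It is the inverse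
stereographic projection of `-2p` from the pole `x` (compare `stereoInvFunAux`). -/
noncomputable def opticalMap (x p : E) : E :=
  (‖p‖ ^ 2 + 1)⁻¹ • ((-2 : ℝ) • p + (‖p‖ ^ 2 - 1) • x)

theorem sub_opticalMap (x p : E) :
    x - opticalMap x p = (2 / (‖p‖ ^ 2 + 1)) • (x + p) := by
  unfold opticalMap
  match_scalars
  · field_simp
    ring
  · field_simp

end NormedSpace

section InnerProductSpace

variable {E : Type*} [NormedAddCommGroup E] [InnerProductSpace ℝ E]

theorem norm_sub_opticalMap_sq {x p : E} (hx : ‖x‖ = 1) (hp : ⟪p, x⟫ = 0) :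
    ‖x - opticalMap x p‖ ^ 2 = 4 / (‖p‖ ^ 2 + 1) := by
  have pythagoras : ‖x + p‖ ^ 2 = ‖p‖ ^ 2 + 1 := by
    rw [add_comm x p, norm_add_sq_real, hp, hx]
    ring
  rw [sub_opticalMap, norm_smul, mul_pow, pythagoras, Real.norm_eq_abs, sq_abs]
  field_simp
  norm_num

theorem ne_opticalMap {x p : E} (hx : ‖x‖ = 1) (hp : ⟪p, x⟫ = 0) : x ≠ opticalMap x p := by
  rw [← sub_ne_zero, ← norm_ne_zero_iff, ← pow_ne_zero_iff two_ne_zero,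
    norm_sub_opticalMap_sq hx hp]
  positivity

theorem two_div_norm_sq_smul_sub_opticalMap {x p : E} (hx : ‖x‖ = 1) (hp : ⟪p, x⟫ = 0) :
    (2 / ‖x - opticalMap x p‖ ^ 2) • (x - opticalMap x p) = x + p := by
  have hscale : 2 / (4 / (‖p‖ ^ 2 + 1)) * (2 / (‖p‖ ^ 2 + 1)) = 1 := by
    field_simp
    norm_num
  rw [norm_sub_opticalMap_sq hx hp, sub_opticalMap, smul_smul, hscale, one_smul]

variable [CompleteSpace E]

theorem hasGradientAt_const_mul_log_norm_sub (c : ℝ) {x y : E} (hxy : x ≠ y) :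
    HasGradientAt (fun z => c * Real.log ‖z - y‖) ((c / ‖x - y‖ ^ 2) • (x - y)) x := by
  have hne : ‖x - y‖ ^ 2 ≠ 0 := pow_ne_zero 2 (norm_ne_zero_iff.mpr (sub_ne_zero.mpr hxy))
  -- Unlike the norm, its square is differentiable everywhere.
  have hlog : (fun z => c * Real.log ‖z - y‖) = fun z => c / 2 * Real.log (‖z - y‖ ^ 2) := by
    funext z
    rw [Real.log_pow]
    push_cast
    ring
  rw [hlog, hasGradientAt_iff_hasFDerivAt]
  refine ((((hasFDerivAt_id x).sub_const y).norm_sq.log hne).const_mul (c / 2)).congr_fderiv ?_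
  ext v
  simp only [id_eq, ContinuousLinearMap.comp_id, smul_apply, coe_innerSL_apply, map_smul,
    InnerProductSpace.toDual_apply_apply, nsmul_eq_mul, Nat.cast_ofNat, smul_eq_mul]
  field_simp

theorem cost_gradient_optimality_general {x p : E} (hx : ‖x‖ = 1) (hp : ⟪p, x⟫ = 0) :
    HasGradientAt (fun z => -2 * Real.log ‖z - opticalMap x p‖) (-(x + p)) x ∧
    ∀ v : E, ⟪v, x⟫ = 0 →
      fderiv ℝ (fun z => -2 * Real.log ‖z - opticalMap x p‖) x v = -⟪p, v⟫ := by
  have hgrad : HasGradientAt (fun z => -2 * Real.log ‖z - opticalMap x p‖) (-(x + p)) x := by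
    rw [← two_div_norm_sq_smul_sub_opticalMap hx hp, ← neg_smul, ← neg_div]
    exact hasGradientAt_const_mul_log_norm_sub (-2) (ne_opticalMap hx hp)
  refine ⟨hgrad, fun v hv => ?_⟩
  calc
    fderiv ℝ (fun z => -2 * Real.log ‖z - opticalMap x p‖) x v = ⟪-(x + p), v⟫ :=
      hgrad.fderiv_apply
    _ = -⟪p, v⟫ := by rw [inner_neg_left, inner_add_left, real_inner_comm, hv, zero_add]

end InnerProductSpace

/-- With `y = T(x,p)`, the function `z ↦ −2 log‖z − y‖` is differentiable at
`x` with Euclidean gradient `−(x + p)`; in particular its directional derivative at `x`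
along any tangent vector `v` (`⟨v,x⟩ = 0`) equals `−⟨p, v⟩`, i.e. the tangential gradient
of the cost `c(·, T(x,p))` at `x` is `−p` (the optimality condition `∇ₓc(x,T(x,p)) = −p`). -/
theorem cost_gradient_optimality
    (x p : EuclideanSpace ℝ (Fin 3)) (hx : ‖x‖ = 1) (hp : ⟪p, x⟫ = 0)
    (y : EuclideanSpace ℝ (Fin 3))
    (hy : y = (‖p‖ ^ 2 + 1)⁻¹ • ((-2 : ℝ) • p + (‖p‖ ^ 2 - 1) • x)) :
    HasGradientAt (fun z : EuclideanSpace ℝ (Fin 3) => -2 * Real.log ‖z - y‖)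
        (-(x + p)) x ∧
    ∀ v : EuclideanSpace ℝ (Fin 3), ⟪v, x⟫ = 0 →
      fderiv ℝ (fun z : EuclideanSpace ℝ (Fin 3) => -2 * Real.log ‖z - y‖) x v
        = -⟪p, v⟫ := by
  subst hy
  exact cost_gradient_optimality_general hx hp
end

section
/- Let M be a real symmetric positive semidefinite n × n matrix. Then det(M) = min over all orthonormal bases (ν₁, …, νₙ) of ℝⁿ of the product ∏_{j=1}^n ⟨νⱼ, M νⱼ⟩, and the minimum is attained (at an orthonormal eigenbasis of M). Moreover, since ⟨νⱼ, M νⱼ⟩ ≥ 0 for every unit vector νⱼ, the same identity holds with each factor replaced by max{⟨νⱼ, M νⱼ⟩, 0}: det(M) = min over orthonormal bases of ∏_{j=1}^n max{⟨νⱼ, M νⱼ⟩, 0}. -/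
open Matrix

/-!
In an eigenbasis of a positive semidefinite `A = U diag(λ) Uᴴ`, the diagonal of `A` is `W λ` with
`Wᵢⱼ = |Uᵢⱼ|²`. As `W` is doubly stochastic, weighted AM-GM in each row, multiplied over all the
rows, gives `∏ λⱼ ≤ ∏ (W λ)ᵢ`, which is Hadamard's inequality `det A ≤ ∏ Aᵢᵢ`. The numbers
`⟨νⱼ, M νⱼ⟩` for an orthonormal basis `ν` are the diagonal of a unitary conjugate of `M`, which is
again positive semidefinite and has the same determinant; conjugation to diagonal form attains
equality.
-/

section Columns

lemma star_col_dotProduct_mulVec_col {m n R : Type*} [Fintype m] [NonUnitalSemiring R] [Star R]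
    (M : Matrix m m R) (B : Matrix m n R) (j : n) :
    star (B.col j) ⬝ᵥ M *ᵥ B.col j = (Bᴴ * M * B) j j := by
  rw [dotProduct_mulVec]
  rfl

lemma mem_unitaryGroup_iff_star_col_dotProduct_col {n R : Type*} [Fintype n] [DecidableEq n]
    [CommRing R] [StarRing R] {U : Matrix n n R} :
    U ∈ unitaryGroup n R ↔ ∀ i k, star (U.col i) ⬝ᵥ U.col k = if i = k then (1 : R) else 0 := by
  rw [mem_unitaryGroup_iff', ← ext_iff]
  rfl

end Columns

section Hadamard

open scoped ComplexOrder

variable {ι 𝕜 : Type*} [Fintype ι] [DecidableEq ι] [RCLike 𝕜]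

lemma prod_le_prod_mulVec_of_mem_doublyStochastic {W : Matrix ι ι ℝ}
    (hW : W ∈ doublyStochastic ℝ ι) {x : ι → ℝ} (hx : ∀ j, 0 ≤ x j) :
    ∏ j, x j ≤ ∏ i, (W *ᵥ x) i := by
  have hW_nonneg (i j : ι) : 0 ≤ W i j := nonneg_of_mem_doublyStochastic hW
  calc ∏ j, x j = ∏ j, ∏ i, x j ^ W i j := by
        refine Finset.prod_congr rfl fun j _ => ?_
        rw [← Real.rpow_sum_of_nonneg (hx j) fun i _ => hW_nonneg i j,
          sum_col_of_mem_doublyStochastic hW, Real.rpow_one]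
    _ = ∏ i, ∏ j, x j ^ W i j := Finset.prod_comm
    _ ≤ ∏ i, (W *ᵥ x) i :=
        Finset.prod_le_prod
          (fun i _ => Finset.prod_nonneg fun j _ => Real.rpow_nonneg (hx j) _)
          (fun i _ => Real.geom_mean_le_arith_mean_weighted _ _ _ (fun j _ => hW_nonneg i j)
            (sum_row_of_mem_doublyStochastic hW i) fun j _ => hx j)

lemma map_norm_sq_mem_doublyStochastic {U : Matrix ι ι 𝕜} (hU : U ∈ unitaryGroup ι 𝕜) :
    U.map (‖·‖ ^ 2) ∈ doublyStochastic ℝ ι := by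
  refine mem_doublyStochastic_iff_sum.mpr ⟨fun i j => sq_nonneg _, fun i => ?_, fun j => ?_⟩
  · have hrow := congr_fun₂ (mem_unitaryGroup_iff.mp hU) i i
    simp only [mul_apply, star_apply, RCLike.star_def, RCLike.mul_conj, one_apply_eq] at hrow
    exact_mod_cast hrow
  · have hcol := congr_fun₂ (mem_unitaryGroup_iff'.mp hU) j j
    simp only [mul_apply, star_apply, RCLike.star_def, RCLike.conj_mul, one_apply_eq] at hcol
    exact_mod_cast hcol

lemma diag_eq_map_norm_sq_mulVec_eigenvalues {A : Matrix ι ι 𝕜} (hA : A.IsHermitian) (i : ι) :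
    A i i = (((hA.eigenvectorUnitary : Matrix ι ι 𝕜).map (‖·‖ ^ 2) *ᵥ hA.eigenvalues) i : ℝ) := by
  conv_lhs => rw [hA.spectral_theorem, Unitary.conjStarAlgAut_apply, mul_apply]
  simp only [mul_diagonal, Function.comp_apply, star_apply, mulVec, dotProduct, map_apply,
    RCLike.ofReal_sum, RCLike.ofReal_mul, RCLike.ofReal_pow, ← RCLike.mul_conj,
    RCLike.star_def, mul_right_comm]

theorem det_le_prod_diag_of_posSemidef {A : Matrix ι ι 𝕜} (hA : A.PosSemidef) :
    A.det ≤ ∏ i, A i i := by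
  simp only [hA.1.det_eq_prod_eigenvalues, diag_eq_map_norm_sq_mulVec_eigenvalues hA.1]
  exact_mod_cast prod_le_prod_mulVec_of_mem_doublyStochastic
    (map_norm_sq_mem_doublyStochastic hA.1.eigenvectorUnitary.2) hA.eigenvalues_nonneg

lemma det_le_prod_diag_conjTranspose_mul_mul {M U : Matrix ι ι 𝕜} (hM : M.PosSemidef)
    (hU : U ∈ unitaryGroup ι 𝕜) : M.det ≤ ∏ j, (Uᴴ * M * U) j j :=
  calc M.det = (Uᴴ * M * U).det := by
        rw [det_mul_comm, ← mul_assoc, ← star_eq_conjTranspose, mem_unitaryGroup_iff.mp hU, one_mul]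
    _ ≤ ∏ j, (Uᴴ * M * U) j j := det_le_prod_diag_of_posSemidef (hM.conjTranspose_mul_mul_same U)

lemma exists_mem_unitaryGroup_det_eq_prod_diag_conjTranspose_mul_mul {M : Matrix ι ι 𝕜}
    (hM : M.IsHermitian) : ∃ U ∈ unitaryGroup ι 𝕜, M.det = ∏ j, (Uᴴ * M * U) j j := by
  let U : Matrix ι ι 𝕜 := hM.eigenvectorUnitary
  have hdiag : Uᴴ * M * U = diagonal (RCLike.ofReal ∘ hM.eigenvalues) := by
    simpa only [U, Unitary.conjStarAlgAut_apply, Unitary.coe_star, star_eq_conjTranspose,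
      conjTranspose_conjTranspose] using hM.conjStarAlgAut_star_eigenvectorUnitary
  refine ⟨U, hM.eigenvectorUnitary.2, ?_⟩
  simp only [hdiag, diagonal_apply_eq, Function.comp_apply, hM.det_eq_prod_eigenvalues]

theorem det_eq_min_orthonormal_products_general {M : Matrix ι ι 𝕜} (hM : M.PosSemidef) :
    IsLeast {r : 𝕜 | ∃ ν : ι → (ι → 𝕜),
        (∀ i k, star (ν i) ⬝ᵥ ν k = if i = k then (1 : 𝕜) else 0) ∧
        r = ∏ j, star (ν j) ⬝ᵥ M *ᵥ ν j} M.det ∧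
    IsLeast {r : 𝕜 | ∃ ν : ι → (ι → 𝕜),
        (∀ i k, star (ν i) ⬝ᵥ ν k = if i = k then (1 : 𝕜) else 0) ∧
        r = ∏ j, ((max (RCLike.re (star (ν j) ⬝ᵥ M *ᵥ ν j)) 0 : ℝ) : 𝕜)} M.det := by
  have hmax (v : ι → 𝕜) :
      ((max (RCLike.re (star v ⬝ᵥ M *ᵥ v)) 0 : ℝ) : 𝕜) = star v ⬝ᵥ M *ᵥ v := by
    rw [max_eq_left (hM.re_dotProduct_nonneg v)]
    exact RCLike.conj_eq_iff_re.mp (hM.dotProduct_mulVec_nonneg v).isSelfAdjoint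
  simp only [hmax, and_self]
  constructor
  · obtain ⟨U, hU, hdet⟩ := exists_mem_unitaryGroup_det_eq_prod_diag_conjTranspose_mul_mul hM.1
    refine ⟨U.col, mem_unitaryGroup_iff_star_col_dotProduct_col.mp hU, ?_⟩
    simpa only [star_col_dotProduct_mulVec_col] using hdet
  · rintro _ ⟨ν, hν, rfl⟩
    have hU : (of ν)ᵀ ∈ unitaryGroup ι 𝕜 := mem_unitaryGroup_iff_star_col_dotProduct_col.mpr hν
    calc M.det ≤ ∏ j, ((of ν)ᵀᴴ * M * (of ν)ᵀ) j j := det_le_prod_diag_conjTranspose_mul_mul hM hU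
      _ = ∏ j, star (ν j) ⬝ᵥ M *ᵥ ν j :=
        Finset.prod_congr rfl fun j _ => (star_col_dotProduct_mulVec_col M (of ν)ᵀ j).symm

end Hadamard

/-- For a real symmetric positive semidefinite `n × n` matrix `M`,
`det M` is the minimum, over all orthonormal bases `(ν₁, …, νₙ)` of `ℝⁿ`, of
`∏ⱼ ⟨νⱼ, M νⱼ⟩`, and the minimum is attained; the same holds with each factor replaced by
`max{⟨νⱼ, M νⱼ⟩, 0}`. -/
theorem det_eq_min_orthonormal_products
    (n : ℕ) (M : Matrix (Fin n) (Fin n) ℝ) (hM : M.PosSemidef) :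
    IsLeast {r : ℝ | ∃ ν : Fin n → (Fin n → ℝ),
        (∀ i k, ν i ⬝ᵥ ν k = if i = k then (1 : ℝ) else 0) ∧
        r = ∏ j, ν j ⬝ᵥ M.mulVec (ν j)} M.det ∧
    IsLeast {r : ℝ | ∃ ν : Fin n → (Fin n → ℝ),
        (∀ i k, ν i ⬝ᵥ ν k = if i = k then (1 : ℝ) else 0) ∧
        r = ∏ j, max (ν j ⬝ᵥ M.mulVec (ν j)) 0} M.det := by
  simpa using det_eq_min_orthonormal_products_general hM
end
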